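/- arXiv:2409.12819 — 3 statements merged into one kernel-verified Lean document; each statement's English description precedes it below -/
import Mathlib

section
/- Fix an integer r ≥ 2. For k sufficiently large in terms of r, the function F_k satisfies J_k^{(r)}(F_k) ≤ ((log k)/k)^r · I_k(F_k). -/
open MeasureTheory Filter

/-- `A = log k - 2 log log k`. -/
noncomputable def Aval (k : ℕ) : ℝ := Real.log k - 2 * Real.log (Real.log k)

/-- `T = (e^A - 1)/A`. -/
noncomputable def Tval (k : ℕ) : ℝ := (Real.exp (Aval k) - 1) / Aval k

/-- `g(t) = 1/(1+At)` for `t ∈ [0,T]` and `0` otherwise. -/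
noncomputable def gfun (k : ℕ) (t : ℝ) : ℝ :=
  if t ∈ Set.Icc (0 : ℝ) (Tval k) then 1 / (1 + Aval k * t) else 0

/-- `F_k(t_1,…,t_k) = ∏ g(k t_i)` if `t_1 + ⋯ + t_k ≤ 1`, and `0` otherwise. -/
noncomputable def Fk (k : ℕ) (t : Fin k → ℝ) : ℝ :=
  if ∑ i, t i ≤ 1 then ∏ i, gfun k (k * t i) else 0

/-- `I_k(F) = ∫_{[0,∞)^k} F`. -/
noncomputable def Iint (k : ℕ) (F : (Fin k → ℝ) → ℝ) : ℝ :=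
  ∫ t in Set.univ.pi (fun _ : Fin k => Set.Ici (0 : ℝ)), F t

/-- `J_k^(r)(F) = ∫_{[0,∞)^{k-r}} (∫_{[0,∞)^r} F dt_{k-r+1}⋯dt_k)² dt_1⋯dt_{k-r}`. -/
noncomputable def Jint (k r : ℕ) (h : r ≤ k) (F : (Fin k → ℝ) → ℝ) : ℝ :=
  ∫ t in Set.univ.pi (fun _ : Fin (k - r) => Set.Ici (0 : ℝ)),
    (∫ u in Set.univ.pi (fun _ : Fin r => Set.Ici (0 : ℝ)),
      F (fun i => Fin.append t u (Fin.cast (Nat.sub_add_cancel h).symm i))) ^ 2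

/-!
Write `F_k` as the product of `f (t_i)`, `f t = g (k t)`, cut off to the simplex `∑ t_i ≤ 1`.
Dropping the cutoff bounds `J` above by `(∫ f) ^ (2r) * (∫ f²) ^ (k - r)`, and shrinking the simplex
to the cube `[0, 1/k]^k` bounds `I` below by `(∫₀^{1/k} f) ^ k`. Here `∫ f = 1/k` by the choice of
`T`, while `∫ f² ≤ 1/(kA) ≤ log (1 + A)/(kA) = ∫₀^{1/k} f` as soon as `A ≥ 2`. Hence
`J ≤ (A/k) ^ r * I`, uniformly in `r`, and `A ≤ log k`.
-/

section PiIntegral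

variable {ι α 𝕜 : Type*} [Fintype ι] [RCLike 𝕜] [MeasurableSpace α] {μ : Measure α} [SigmaFinite μ]

lemma setIntegral_univ_pi_prod_eq_pow (f : α → 𝕜) (s : Set α) :
    ∫ t in Set.univ.pi (fun _ : ι => s), ∏ i, f (t i) ∂Measure.pi (fun _ => μ) =
      (∫ x in s, f x ∂μ) ^ Fintype.card ι := by
  rw [Measure.restrict_pi_pi]
  exact integral_fintype_prod_eq_pow f

lemma integrableOn_univ_pi_prod {f : α → 𝕜} {s : Set α} (hf : IntegrableOn f s μ) :
    IntegrableOn (fun t : ι → α => ∏ i, f (t i)) (Set.univ.pi fun _ => s)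
      (Measure.pi fun _ => μ) := by
  rw [IntegrableOn, Measure.restrict_pi_pi]
  exact Integrable.fintype_prod fun _ => hf

end PiIntegral

lemma prod_append_cast_eq_mul {M α : Type*} [CommMonoid M] {k m n : ℕ} (h : k = m + n) (f : α → M)
    (t : Fin m → α) (u : Fin n → α) :
    ∏ i, f (Fin.append t u (Fin.cast h i)) = (∏ i, f (t i)) * ∏ j, f (u j) := by
  rw [Fin.prod_congr' (fun i => f (Fin.append t u i)) h, Fin.prod_univ_add]
  simp only [Fin.append_left, Fin.append_right]

section SimplexProd

variable {ι : Type*} [Fintype ι] {f : ℝ → ℝ}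

/-- The product `∏ f (t_i)` cut off to the half-space `∑ t_i ≤ 1`, which meets the nonnegative
orthant in the standard simplex. `Fk k` is the case `f t = g (k t)`. -/
noncomputable def simplexProd (f : ℝ → ℝ) (t : ι → ℝ) : ℝ :=
  if ∑ i, t i ≤ 1 then ∏ i, f (t i) else 0

lemma simplexProd_nonneg (hf : ∀ x, 0 ≤ f x) (t : ι → ℝ) : 0 ≤ simplexProd f t := by
  unfold simplexProd
  split_ifs
  exacts [Finset.prod_nonneg fun _ _ => hf _, le_rfl]

lemma simplexProd_le_prod (hf : ∀ x, 0 ≤ f x) (t : ι → ℝ) :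
    simplexProd f t ≤ ∏ i, f (t i) := by
  unfold simplexProd
  split_ifs
  exacts [le_rfl, Finset.prod_nonneg fun _ _ => hf _]

lemma integrableOn_simplexProd (hf : IntegrableOn f (Set.Ici 0)) :
    IntegrableOn (simplexProd (ι := ι) f) (Set.univ.pi fun _ => Set.Ici 0) := by
  have hmeas : MeasurableSet {t : ι → ℝ | ∑ i, t i ≤ 1} :=
    measurableSet_le (by fun_prop) (by fun_prop)
  exact (integrableOn_univ_pi_prod hf).indicator hmeas

lemma sum_le_one_of_forall_le_inv_card {t : ι → ℝ} (ht : ∀ i, t i ≤ (Fintype.card ι : ℝ)⁻¹) :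
    ∑ i, t i ≤ 1 := by
  calc ∑ i, t i ≤ ∑ _i : ι, (Fintype.card ι : ℝ)⁻¹ := Finset.sum_le_sum fun i _ => ht i
    _ = Fintype.card ι * (Fintype.card ι : ℝ)⁻¹ := by simp
    _ ≤ 1 := mul_inv_le_one

lemma pow_setIntegral_Icc_le_setIntegral_simplexProd (hf : ∀ x, 0 ≤ f x)
    (hfi : IntegrableOn f (Set.Ici 0)) :
    (∫ x in Set.Icc 0 (Fintype.card ι : ℝ)⁻¹, f x) ^ Fintype.card ι ≤
      ∫ t in Set.univ.pi (fun _ : ι => Set.Ici 0), simplexProd f t := by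
  set b : ℝ := (Fintype.card ι : ℝ)⁻¹
  have hcube : MeasurableSet (Set.univ.pi fun _ : ι => Set.Icc 0 b) :=
    MeasurableSet.univ_pi fun _ => measurableSet_Icc
  have hsub : Set.univ.pi (fun _ : ι => Set.Icc 0 b) ⊆ Set.univ.pi fun _ => Set.Ici 0 :=
    Set.pi_mono fun _ _ => Set.Icc_subset_Ici_self
  calc (∫ x in Set.Icc 0 b, f x) ^ Fintype.card ι
      = ∫ t in Set.univ.pi (fun _ : ι => Set.Icc 0 b), ∏ i, f (t i) :=
        (setIntegral_univ_pi_prod_eq_pow f _).symm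
    _ = ∫ t in Set.univ.pi (fun _ : ι => Set.Icc 0 b), simplexProd f t :=
        setIntegral_congr_fun hcube fun t ht =>
          (if_pos (sum_le_one_of_forall_le_inv_card fun i => (ht i trivial).2)).symm
    _ ≤ ∫ t in Set.univ.pi (fun _ : ι => Set.Ici 0), simplexProd f t :=
        setIntegral_mono_set (integrableOn_simplexProd hfi)
          (ae_of_all _ (simplexProd_nonneg hf)) hsub.eventuallyLE

lemma setIntegral_simplexProd_append_le {k m n : ℕ} (h : k = m + n) (hf : ∀ x, 0 ≤ f x)
    (hfi : IntegrableOn f (Set.Ici 0)) (t : Fin m → ℝ) :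
    ∫ u in Set.univ.pi (fun _ : Fin n => Set.Ici 0),
        simplexProd f (fun i => Fin.append t u (Fin.cast h i)) ≤
      (∏ i, f (t i)) * (∫ x in Set.Ici 0, f x) ^ n := by
  calc ∫ u in Set.univ.pi (fun _ : Fin n => Set.Ici 0),
        simplexProd f (fun i => Fin.append t u (Fin.cast h i))
      ≤ ∫ u in Set.univ.pi (fun _ : Fin n => Set.Ici 0), (∏ i, f (t i)) * ∏ j, f (u j) := by
        refine integral_mono_of_nonneg (ae_of_all _ fun u => simplexProd_nonneg hf _)
          ((integrableOn_univ_pi_prod hfi).const_mul _) (ae_of_all _ fun u => ?_)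
        exact (simplexProd_le_prod hf _).trans_eq (prod_append_cast_eq_mul h f t u)
    _ = (∏ i, f (t i)) * (∫ x in Set.Ici 0, f x) ^ n := by
        rw [integral_const_mul, volume_pi, setIntegral_univ_pi_prod_eq_pow, Fintype.card_fin]

variable {k r : ℕ}

lemma Jint_simplexProd_le (h : r ≤ k) (hf : ∀ x, 0 ≤ f x) (hfi : IntegrableOn f (Set.Ici 0))
    (hfi2 : IntegrableOn (fun x => f x ^ 2) (Set.Ici 0)) :
    Jint k r h (simplexProd f) ≤
      ((∫ x in Set.Ici 0, f x) ^ r) ^ 2 * (∫ x in Set.Ici 0, f x ^ 2) ^ (k - r) := by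
  set m : ℝ := ∫ x in Set.Ici 0, f x
  calc Jint k r h (simplexProd f)
      ≤ ∫ t in Set.univ.pi (fun _ : Fin (k - r) => Set.Ici 0), (m ^ r) ^ 2 * ∏ i, f (t i) ^ 2 := by
        refine integral_mono_of_nonneg (ae_of_all _ fun t => sq_nonneg _)
          ((integrableOn_univ_pi_prod hfi2).const_mul _) (ae_of_all _ fun t => ?_)
        have hinner := setIntegral_simplexProd_append_le (Nat.sub_add_cancel h).symm hf hfi t
        refine (pow_le_pow_left₀ (integral_nonneg fun u => simplexProd_nonneg hf _)
          hinner 2).trans_eq ?_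
        simp only [m, mul_pow, mul_comm, Finset.prod_pow]
    _ = (m ^ r) ^ 2 * (∫ x in Set.Ici 0, f x ^ 2) ^ (k - r) := by
        rw [integral_const_mul, volume_pi, setIntegral_univ_pi_prod_eq_pow (fun x => f x ^ 2),
          Fintype.card_fin]

lemma Jint_simplexProd_le_mul_Iint {c : ℝ} (h : r ≤ k) (hf : ∀ x, 0 ≤ f x)
    (hfi : IntegrableOn f (Set.Ici 0)) (hfi2 : IntegrableOn (fun x => f x ^ 2) (Set.Ici 0))
    (hc : 0 < c) (hsq : ∫ x in Set.Ici 0, f x ^ 2 ≤ c)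
    (hcube : c ≤ ∫ x in Set.Icc 0 (k : ℝ)⁻¹, f x) :
    Jint k r h (simplexProd f) ≤
      ((∫ x in Set.Ici 0, f x) ^ 2 / c) ^ r * Iint k (simplexProd f) := by
  set m : ℝ := ∫ x in Set.Ici 0, f x
  have hI : c ^ k ≤ Iint k (simplexProd f) := by
    have := pow_setIntegral_Icc_le_setIntegral_simplexProd (ι := Fin k) hf hfi
    rw [Fintype.card_fin] at this
    exact (pow_le_pow_left₀ hc.le hcube k).trans this
  calc Jint k r h (simplexProd f)
      ≤ (m ^ r) ^ 2 * (∫ x in Set.Ici 0, f x ^ 2) ^ (k - r) := Jint_simplexProd_le h hf hfi hfi2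
    _ ≤ (m ^ r) ^ 2 * c ^ (k - r) := by gcongr
    _ = (m ^ 2 / c) ^ r * c ^ k := by
        rw [div_pow, pow_right_comm, ← pow_sub_mul_pow c h]
        field_simp
    _ ≤ (m ^ 2 / c) ^ r * Iint k (simplexProd f) := by gcongr

end SimplexProd

section CutoffReciprocal

variable {a b s : ℝ}

lemma intervalIntegral_one_div_one_add_mul (ha : 0 < a) (hs : 0 ≤ s) :
    ∫ x in (0 : ℝ)..s, 1 / (1 + a * x) = Real.log (1 + a * s) / a := by
  rw [intervalIntegral.integral_comp_add_mul (fun y => 1 / y) ha.ne',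
    integral_one_div_of_pos (by simp) (by positivity)]
  simp [div_eq_inv_mul]

lemma intervalIntegral_one_div_one_add_mul_sq (ha : 0 < a) (hs : 0 ≤ s) :
    ∫ x in (0 : ℝ)..s, (1 / (1 + a * x)) ^ 2 = s / (1 + a * s) := by
  have hpos : 0 < 1 + a * s := by positivity
  have hzpow (y : ℝ) : (1 / y) ^ 2 = y ^ (-2 : ℤ) := by simp [zpow_neg]
  simp only [hzpow]
  rw [intervalIntegral.integral_comp_add_mul (fun y => y ^ (-2 : ℤ)) ha.ne',
    integral_zpow (.inr ⟨by norm_num, Set.notMem_uIcc_of_lt (by simp) hpos⟩)]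
  simp only [show (-2 : ℤ) + 1 = -1 from rfl, zpow_neg_one, smul_eq_mul, mul_zero, add_zero]
  push_cast
  field_simp
  ring

/-- The function `1 / (1 + a x)` restricted to `[0, s]` and extended by zero: the common shape of
`g` and of its rescaling `g (k x)`. -/
noncomputable def cutoffReciprocal (a s : ℝ) : ℝ → ℝ :=
  (Set.Icc 0 s).indicator fun x => 1 / (1 + a * x)

lemma cutoffReciprocal_nonneg (ha : 0 ≤ a) (x : ℝ) : 0 ≤ cutoffReciprocal a s x :=
  Set.indicator_nonneg (fun y hy => by have := hy.1; positivity) x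

lemma cutoffReciprocal_sq :
    (fun x => cutoffReciprocal a s x ^ 2) =
      (Set.Icc 0 s).indicator fun x => (1 / (1 + a * x)) ^ 2 := by
  ext x
  by_cases hx : x ∈ Set.Icc 0 s <;> simp [cutoffReciprocal, hx]

lemma continuousOn_one_div_one_add_mul (ha : 0 ≤ a) :
    ContinuousOn (fun x => 1 / (1 + a * x)) (Set.Icc 0 s) :=
  ContinuousOn.div (by fun_prop) (by fun_prop) fun x hx => by have := hx.1; positivity

lemma integrable_cutoffReciprocal (ha : 0 ≤ a) : Integrable (cutoffReciprocal a s) :=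
  (continuousOn_one_div_one_add_mul ha).integrableOn_Icc.integrable_indicator measurableSet_Icc

lemma integrable_cutoffReciprocal_sq (ha : 0 ≤ a) :
    Integrable fun x => cutoffReciprocal a s x ^ 2 := by
  rw [cutoffReciprocal_sq]
  exact ((continuousOn_one_div_one_add_mul ha).pow 2).integrableOn_Icc.integrable_indicator
    measurableSet_Icc

lemma setIntegral_Ici_indicator_Icc (hs : 0 ≤ s) (φ : ℝ → ℝ) :
    ∫ x in Set.Ici 0, (Set.Icc 0 s).indicator φ x = ∫ x in (0 : ℝ)..s, φ x := by
  rw [setIntegral_indicator measurableSet_Icc, Set.inter_eq_right.2 Set.Icc_subset_Ici_self,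
    integral_Icc_eq_integral_Ioc, intervalIntegral.integral_of_le hs]

lemma setIntegral_Ici_cutoffReciprocal (ha : 0 < a) (hs : 0 ≤ s) :
    ∫ x in Set.Ici 0, cutoffReciprocal a s x = Real.log (1 + a * s) / a := by
  rw [cutoffReciprocal, setIntegral_Ici_indicator_Icc hs,
    intervalIntegral_one_div_one_add_mul ha hs]

lemma setIntegral_Ici_cutoffReciprocal_sq_le (ha : 0 < a) (hs : 0 ≤ s) :
    ∫ x in Set.Ici 0, cutoffReciprocal a s x ^ 2 ≤ 1 / a := by
  rw [cutoffReciprocal_sq, setIntegral_Ici_indicator_Icc hs,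
    intervalIntegral_one_div_one_add_mul_sq ha hs, div_le_div_iff₀ (by positivity) ha]
  linarith

lemma setIntegral_Icc_cutoffReciprocal (ha : 0 < a) (hb : 0 ≤ b) (hbs : b ≤ s) :
    ∫ x in Set.Icc 0 b, cutoffReciprocal a s x = Real.log (1 + a * b) / a := by
  rw [cutoffReciprocal, setIntegral_indicator measurableSet_Icc,
    Set.inter_eq_left.2 (Set.Icc_subset_Icc_right hbs), integral_Icc_eq_integral_Ioc,
    ← intervalIntegral.integral_of_le hb, intervalIntegral_one_div_one_add_mul ha hb]

end CutoffReciprocal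

lemma tendsto_sub_const_mul_log_atTop (c : ℝ) :
    Tendsto (fun x => x - c * Real.log x) atTop atTop := by
  have hlog : (fun x => c * Real.log x) =o[atTop] (id : ℝ → ℝ) :=
    Real.isLittleO_log_id_atTop.const_mul_left c
  exact (Asymptotics.IsEquivalent.refl.sub_isLittleO hlog).symm.tendsto_atTop tendsto_id

lemma tendsto_log_natCast_atTop : Tendsto (fun k : ℕ => Real.log k) atTop atTop :=
  Real.tendsto_log_atTop.comp tendsto_natCast_atTop_atTop

lemma tendsto_Aval_atTop : Tendsto Aval atTop atTop :=
  (tendsto_sub_const_mul_log_atTop 2).comp tendsto_log_natCast_atTop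

section Fk

variable {k : ℕ}

lemma Aval_le_log (hk : 1 ≤ Real.log k) : Aval k ≤ Real.log k := by
  unfold Aval
  linarith [Real.log_nonneg hk]

lemma one_le_Tval (hA : 0 < Aval k) : 1 ≤ Tval k := by
  rw [Tval, one_le_div hA]
  linarith [Real.add_one_le_exp (Aval k)]

lemma one_add_Aval_mul_Tval (hA : Aval k ≠ 0) : 1 + Aval k * Tval k = Real.exp (Aval k) := by
  rw [Tval, mul_div_cancel₀ _ hA, add_sub_cancel]

lemma gfun_mul_eq_cutoffReciprocal (hk : k ≠ 0) (x : ℝ) :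
    gfun k (k * x) = cutoffReciprocal (k * Aval k) (Tval k / k) x := by
  have hk0 : (0 : ℝ) < k := by positivity
  have hmem : k * x ∈ Set.Icc 0 (Tval k) ↔ x ∈ Set.Icc 0 (Tval k / k) := by
    rw [Set.mem_Icc, Set.mem_Icc, le_div_iff₀' hk0, mul_nonneg_iff_of_pos_left hk0]
  simp only [gfun, cutoffReciprocal, Set.indicator_apply, hmem]
  ring_nf

lemma Fk_eq_simplexProd (hk : k ≠ 0) :
    Fk k = simplexProd (cutoffReciprocal (k * Aval k) (Tval k / k)) := by
  ext t
  simp only [Fk, simplexProd, gfun_mul_eq_cutoffReciprocal hk]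

lemma Iint_Fk_nonneg (hk : k ≠ 0) (hA : 0 ≤ Aval k) : 0 ≤ Iint k (Fk k) := by
  rw [Fk_eq_simplexProd hk]
  exact integral_nonneg (simplexProd_nonneg (cutoffReciprocal_nonneg (by positivity)))

lemma setIntegral_Ici_cutoffReciprocal_eq_one_div (hk : k ≠ 0) (hA : 0 < Aval k) :
    ∫ x in Set.Ici 0, cutoffReciprocal (k * Aval k) (Tval k / k) x = 1 / k := by
  have hT := one_le_Tval hA
  have harg : 1 + k * Aval k * (Tval k / k) = Real.exp (Aval k) := by
    rw [← one_add_Aval_mul_Tval hA.ne']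
    field_simp
  rw [setIntegral_Ici_cutoffReciprocal (by positivity) (by positivity), harg, Real.log_exp]
  field_simp

lemma one_div_le_setIntegral_Icc_cutoffReciprocal (hk : k ≠ 0) (hA : 2 ≤ Aval k) :
    1 / (k * Aval k) ≤
      ∫ x in Set.Icc 0 (k : ℝ)⁻¹, cutoffReciprocal (k * Aval k) (Tval k / k) x := by
  have hA0 : 0 < Aval k := by linarith
  have hinv_le : (k : ℝ)⁻¹ ≤ Tval k / k := by
    rw [inv_eq_one_div]
    gcongr
    exact one_le_Tval hA0
  have harg : 1 + k * Aval k * (k : ℝ)⁻¹ = 1 + Aval k := by field_simp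
  have hlog : 1 ≤ Real.log (1 + Aval k) := by
    rw [Real.le_log_iff_exp_le (by positivity)]
    linarith [Real.exp_one_lt_three]
  rw [setIntegral_Icc_cutoffReciprocal (by positivity) (by positivity) hinv_le, harg]
  gcongr

lemma Jint_Fk_le (hk : k ≠ 0) (hA : 2 ≤ Aval k) {r : ℕ} (h : r ≤ k) :
    Jint k r h (Fk k) ≤ (Aval k / k) ^ r * Iint k (Fk k) := by
  have hA0 : 0 < Aval k := by linarith
  have hT := one_le_Tval hA0
  have ha : 0 < k * Aval k := by positivity
  have hratio : (1 / k : ℝ) ^ 2 / (1 / (k * Aval k)) = Aval k / k := by field_simp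
  rw [Fk_eq_simplexProd hk, ← hratio, ← setIntegral_Ici_cutoffReciprocal_eq_one_div hk hA0]
  exact Jint_simplexProd_le_mul_Iint h (cutoffReciprocal_nonneg ha.le)
    (integrable_cutoffReciprocal ha.le).integrableOn
    (integrable_cutoffReciprocal_sq ha.le).integrableOn (one_div_pos.2 ha)
    (setIntegral_Ici_cutoffReciprocal_sq_le ha (by positivity))
    (one_div_le_setIntegral_Icc_cutoffReciprocal hk hA)

end Fk

theorem stmt8_general :
    ∀ᶠ k : ℕ in atTop, ∀ (r : ℕ) (h : r ≤ k),
      Jint k r h (Fk k) ≤ (Real.log k / k) ^ r * Iint k (Fk k) := by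
  filter_upwards [eventually_ne_atTop 0, tendsto_Aval_atTop.eventually_ge_atTop 2,
    tendsto_log_natCast_atTop.eventually_ge_atTop 1] with k hk hA hlog r h
  have hA0 : 0 ≤ Aval k := by linarith
  calc Jint k r h (Fk k) ≤ (Aval k / k) ^ r * Iint k (Fk k) := Jint_Fk_le hk hA h
    _ ≤ (Real.log k / k) ^ r * Iint k (Fk k) := by
        gcongr
        exacts [Iint_Fk_nonneg hk hA0, Aval_le_log hlog]

theorem stmt8 (r : ℕ) (hr : 2 ≤ r) :
    ∀ᶠ k : ℕ in atTop, ∀ h : r ≤ k,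
      Jint k r h (Fk k) ≤ (Real.log k / k) ^ r * Iint k (Fk k) :=
  stmt8_general.mono fun _ hk => hk r
end

section
/- Fix an integer r ≥ 2. For k sufficiently large in terms of r, for every real x ≥ log k one has ∫_{t_1,...,t_r ≥ 0, t_1+⋯+t_r ≤ x} g(t_1)² ⋯ g(t_r)² dt_1 ⋯ dt_r ≥ 1/(log k)^r. -/
open MeasureTheory Filter

/-!
The cube `[0, 1]^r` lies in the simplex `t₁ + ⋯ + t_r ≤ x` as soon as `r ≤ x`, and the integrand is
nonnegative, so the integral is at least `(∫₀¹ g²)^r`. Since `T ≥ 1`, the function `g` is not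
truncated on `[0, 1]` and `∫₀¹ g² = 1 / (1 + A)`. Finally `1 + A ≤ log k` once `log log k ≥ 1 / 2`.
-/

section Simplex

variable {ι : Type*} [Fintype ι]

lemma setIntegral_univ_pi_prod_eq_prod {E : ι → Type*} [∀ i, MeasurableSpace (E i)]
    {𝕜 : Type*} [RCLike 𝕜] (μ : ∀ i, Measure (E i)) [∀ i, SigmaFinite (μ i)]
    (s : ∀ i, Set (E i)) (f : ∀ i, E i → 𝕜) :
    ∫ t in Set.univ.pi s, ∏ i, f i (t i) ∂Measure.pi μ = ∏ i, ∫ t in s i, f i t ∂μ i := by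
  rw [Measure.restrict_pi_pi, integral_fintype_prod_eq_prod]

lemma univ_pi_Icc_zero_subset_simplex {c : ι → ℝ} {x : ℝ} (hc : ∑ i, c i ≤ x) :
    Set.univ.pi (fun i => Set.Icc 0 (c i)) ⊆ {t : ι → ℝ | (∀ i, 0 ≤ t i) ∧ ∑ i, t i ≤ x} :=
  fun _ ht => ⟨fun i => (ht i trivial).1,
    (Finset.sum_le_sum fun i _ => (ht i trivial).2).trans hc⟩

lemma prod_setIntegral_Icc_le_setIntegral_simplex {f : ι → ℝ → ℝ} (hf : ∀ i, Integrable (f i))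
    (hf₀ : ∀ i t, 0 ≤ f i t) {c : ι → ℝ} {x : ℝ} (hc : ∑ i, c i ≤ x) :
    ∏ i, ∫ t in Set.Icc 0 (c i), f i t ≤
      ∫ t in {t : ι → ℝ | (∀ i, 0 ≤ t i) ∧ ∑ i, t i ≤ x}, ∏ i, f i (t i) := by
  rw [← setIntegral_univ_pi_prod_eq_prod, ← volume_pi]
  exact setIntegral_mono_set (Integrable.fintype_prod hf).integrableOn
    (ae_of_all _ fun t => Finset.prod_nonneg fun i _ => hf₀ i (t i))
    (univ_pi_Icc_zero_subset_simplex hc).eventuallyLE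

end Simplex

lemma integral_one_div_one_add_mul_sq {a c : ℝ} (ha : 0 ≤ a) (hc : 0 ≤ c) :
    ∫ t in (0 : ℝ)..c, (1 / (1 + a * t)) ^ 2 = c / (1 + a * c) := by
  have hne : ∀ t ∈ Set.uIcc 0 c, 1 + a * t ≠ 0 := fun t ht => by
    have : 0 ≤ t := (Set.uIcc_of_le hc ▸ ht).1
    positivity
  have hderiv : ∀ t ∈ Set.uIcc 0 c,
      HasDerivAt (fun t => t / (1 + a * t)) ((1 / (1 + a * t)) ^ 2) t := fun t ht => by
    refine ((hasDerivAt_id t).div (((hasDerivAt_id t).const_mul a).const_add 1)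
      (hne t ht)).congr_deriv ?_
    simp only [id, one_div_pow]
    ring
  have hcont : ContinuousOn (fun t => (1 / (1 + a * t)) ^ 2) (Set.uIcc 0 c) :=
    (continuousOn_const.div (by fun_prop) hne).pow 2
  rw [intervalIntegral.integral_eq_sub_of_hasDerivAt hderiv hcont.intervalIntegrable, zero_div,
    sub_zero]

lemma two_mul_log_lt_self {x : ℝ} (hx : 0 < x) : 2 * Real.log x < x := by
  have hhalf : Real.log (x / 2) ≤ x / 2 - 1 := Real.log_le_sub_one_of_pos (by positivity)
  rw [Real.log_div hx.ne' two_ne_zero] at hhalf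
  linarith [Real.log_two_lt_d9]

section Gfun

variable {k : ℕ}

lemma Aval_pos (hk : 0 < Real.log k) : 0 < Aval k :=
  sub_pos.2 (two_mul_log_lt_self hk)

lemma one_add_Aval_le_log (hk : Real.exp (1 / 2) ≤ Real.log k) : 1 + Aval k ≤ Real.log k := by
  have hloglog : 1 / 2 ≤ Real.log (Real.log k) :=
    (Real.le_log_iff_exp_le ((Real.exp_pos _).trans_le hk)).2 hk
  unfold Aval
  linarith

lemma gfun_sq_eq_indicator (k : ℕ) :
    (fun t => gfun k t ^ 2) =
      (Set.Icc 0 (Tval k)).indicator fun t => (1 / (1 + Aval k * t)) ^ 2 := by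
  ext t
  simp only [gfun, Set.indicator_apply, ite_pow, zero_pow two_ne_zero]

lemma integrable_gfun_sq (hA : 0 ≤ Aval k) : Integrable fun t => gfun k t ^ 2 := by
  rw [gfun_sq_eq_indicator, integrable_indicator_iff measurableSet_Icc]
  refine ((continuousOn_const.div (by fun_prop) fun t ht => ?_).pow 2).integrableOn_Icc
  have : 0 ≤ t := ht.1
  positivity

lemma setIntegral_Icc_gfun_sq (hA : 0 ≤ Aval k) {c : ℝ} (hc : 0 ≤ c) (hcT : c ≤ Tval k) :
    ∫ t in Set.Icc 0 c, gfun k t ^ 2 = c / (1 + Aval k * c) := by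
  rw [gfun_sq_eq_indicator, setIntegral_indicator measurableSet_Icc,
    Set.inter_eq_left.2 (Set.Icc_subset_Icc_right hcT), integral_Icc_eq_integral_Ioc,
    ← intervalIntegral.integral_of_le hc, integral_one_div_one_add_mul_sq hA hc]

end Gfun

theorem stmt9_general {r k : ℕ} {x : ℝ} (hk : Real.exp (1 / 2) ≤ Real.log k) (hx : r ≤ x) :
    1 / Real.log k ^ r ≤
      ∫ t in {t : Fin r → ℝ | (∀ i, 0 ≤ t i) ∧ ∑ i, t i ≤ x}, ∏ i, gfun k (t i) ^ 2 := by
  have hA : 0 < Aval k := Aval_pos ((Real.exp_pos _).trans_le hk)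
  calc 1 / Real.log k ^ r = (1 / Real.log k) ^ r := (one_div_pow _ _).symm
    _ ≤ (1 / (1 + Aval k)) ^ r := by gcongr; exact one_add_Aval_le_log hk
    _ = ∏ _i : Fin r, ∫ t in Set.Icc 0 1, gfun k t ^ 2 := by
      simp [setIntegral_Icc_gfun_sq hA.le zero_le_one (one_le_Tval hA)]
    _ ≤ _ := prod_setIntegral_Icc_le_setIntegral_simplex (fun _ => integrable_gfun_sq hA.le)
      (fun _ _ => sq_nonneg _) (by simpa using hx)

theorem stmt9 (r : ℕ) (hr : 2 ≤ r) :
    ∀ᶠ k : ℕ in atTop, ∀ x : ℝ, Real.log k ≤ x →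
      1 / Real.log k ^ r ≤
        ∫ t in {t : Fin r → ℝ | (∀ i, 0 ≤ t i) ∧ ∑ i, t i ≤ x},
          ∏ i, gfun k (t i) ^ 2 := by
  have hlog : Tendsto (fun k : ℕ => Real.log k) atTop atTop :=
    Real.tendsto_log_atTop.comp tendsto_natCast_atTop_atTop
  filter_upwards [hlog.eventually_ge_atTop (Real.exp (1 / 2)), hlog.eventually_ge_atTop (r : ℝ)]
    with k hk hrk x hx using stmt9_general hk (hrk.trans hx)
end

section
/- Let {h_1,...,h_k} be an admissible k-tuple, let S ⊆ ℤ, and let 𝒫 be a set of primes such that for some real x ≥ 2 one has {h_1,...,h_k} ⊆ S ⊆ [0,x²] and #{p ∈ 𝒫 : p > x} > |S| + k. Then there is a set of integers {a_p : p ∈ 𝒫} such that {h_1,...,h_k} = S \ ⋃_{p ∈ 𝒫} {g ∈ ℤ : g ≡ a_p (mod p)}. -/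
/-- A finite set of integers `H` is admissible if for every prime `p`, the residues `n mod p`
with `∏_{h ∈ H} (n + h) ≡ 0 (mod p)` do not cover all of `ℤ/pℤ`. -/
def AdmissibleSet (H : Finset ℤ) : Prop :=
  ∀ p : ℕ, p.Prime → {n : ZMod p | ∏ h ∈ H, (n + (h : ZMod p)) = 0}.ncard < p

/-!
Each `s ∈ S \ H` is to be sieved out by its own large prime `p`, taking `a_p = s`. This is harmless
unless `p ∣ s - h` for some `h ∈ H`; since `0 < |s - h| ≤ x ^ 2` and a product of two distinct large
primes exceeds `x ^ 2`, each `h` excludes at most one `p`. So every `s` has at least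
`|S| - |H| = |S \ H|` large primes at its disposal, and distinct ones can be chosen for distinct
`s`. For the remaining primes, admissibility provides a residue class that misses `H`.
-/

open Finset

theorem AdmissibleSet.exists_forall_not_modEq {H : Finset ℤ} (hH : AdmissibleSet H) {p : ℕ}
    (hp : p.Prime) : ∃ b : ℤ, ∀ h ∈ H, ¬ h ≡ b [ZMOD p] := by
  have roots_ne_univ : {n : ZMod p | ∏ h ∈ H, (n + (h : ZMod p)) = 0} ≠ Set.univ := by
    intro roots_eq
    simpa [roots_eq, Set.ncard_univ] using hH p hp
  obtain ⟨n, hn⟩ := (Set.ne_univ_iff_exists_notMem _).1 roots_ne_univ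
  obtain ⟨m, rfl⟩ := ZMod.intCast_surjective n
  refine ⟨-m, fun h hh hmod ↦ hn (prod_eq_zero hh ?_)⟩
  rw [(ZMod.intCast_eq_intCast_iff _ _ p).2 hmod]
  simp

theorem natCast_mul_le_abs_of_coprime_of_dvd {p q : ℕ} {d : ℤ} (hpq : p.Coprime q) (hd : d ≠ 0)
    (hp : (p : ℤ) ∣ d) (hq : (q : ℤ) ∣ d) : (p * q : ℤ) ≤ |d| :=
  Int.le_of_dvd (abs_pos.2 hd) <|
    (dvd_abs _ _).2 (hpq.isCoprime.mul_dvd hp hq)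

theorem card_filter_modEq_le_one {x : ℝ} (hx : 0 ≤ x) {Q : Finset ℕ}
    (hcop : (Q : Set ℕ).Pairwise Nat.Coprime) (hQ : ∀ p ∈ Q, x < p) {a b : ℤ} (hab : a ≠ b)
    (hdist : |(b - a : ℝ)| ≤ x ^ 2) : #{p ∈ Q | a ≡ b [ZMOD (p : ℕ)]} ≤ 1 := by
  simp only [card_le_one, mem_filter, Int.modEq_iff_dvd]
  rintro p ⟨hpQ, hp⟩ q ⟨hqQ, hq⟩
  by_contra hpq
  have hle : (p * q : ℝ) ≤ |(b - a : ℝ)| := by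
    exact_mod_cast natCast_mul_le_abs_of_coprime_of_dvd (hcop hpQ hqQ hpq)
      (sub_ne_zero.2 hab.symm) hp hq
  have hlt : x * x < p * q := mul_lt_mul'' (hQ p hpQ) (hQ q hqQ) hx hx
  linarith [sq x]

theorem card_le_card_filter_forall_not_add_card {α β : Type*} {s : Finset α} {t : Finset β}
    (r : α → β → Prop) [∀ a b, Decidable (r a b)] (hr : ∀ b ∈ t, #{a ∈ s | r a b} ≤ 1) :
    #s ≤ #{a ∈ s | ∀ b ∈ t, ¬ r a b} + #t := by
  classical
  have excluded_le : #(t.biUnion fun b ↦ {a ∈ s | r a b}) ≤ #t := by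
    simpa using card_biUnion_le_card_mul t _ 1 hr
  have cover : s ⊆ {a ∈ s | ∀ b ∈ t, ¬ r a b} ∪ t.biUnion fun b ↦ {a ∈ s | r a b} := by
    intro a ha
    by_cases h : ∃ b ∈ t, r a b <;> simp_all
  calc
    #s ≤ #{a ∈ s | ∀ b ∈ t, ¬ r a b} + #(t.biUnion fun b ↦ {a ∈ s | r a b}) :=
      (card_le_card cover).trans (card_union_le _ _)
    _ ≤ #{a ∈ s | ∀ b ∈ t, ¬ r a b} + #t := by gcongr

theorem exists_injective_forall_mem_of_natCard_le {ι α : Type*} [Finite ι] (t : ι → Finset α)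
    (ht : ∀ i, Nat.card ι ≤ #(t i)) : ∃ f : ι → α, f.Injective ∧ ∀ i, f i ∈ t i := by
  classical
  have := Fintype.ofFinite ι
  refine (all_card_le_biUnion_card_iff_exists_injective t).1 fun A ↦ ?_
  obtain rfl | ⟨i, hi⟩ := A.eq_empty_or_nonempty
  · simp
  · calc
      #A ≤ Nat.card ι := by simpa using card_le_univ A
      _ ≤ #(t i) := ht i
      _ ≤ #(A.biUnion t) := card_le_card (subset_biUnion_of_mem t hi)

theorem exists_eq_sdiff_iUnion_modEq {H S : Set ℤ} (hHS : H ⊆ S) {P : Set ℕ}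
    (hP : ∀ p ∈ P, ∃ b : ℤ, ∀ h ∈ H, ¬ h ≡ b [ZMOD p]) {f : ↥(S \ H) → ℕ} (hf : f.Injective)
    (hfP : ∀ s, f s ∈ P) (hfH : ∀ s, ∀ h ∈ H, ¬ h ≡ s [ZMOD f s]) :
    ∃ a : ℕ → ℤ, H = S \ ⋃ p ∈ P, {g : ℤ | g ≡ a p [ZMOD p]} := by
  have exists_residue : ∀ p ∈ P, ∃ c : ℤ, (∀ h ∈ H, ¬ h ≡ c [ZMOD p]) ∧ ∀ s, f s = p → c = s := by
    intro p hp
    by_cases hpf : ∃ s, f s = p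
    · obtain ⟨s, rfl⟩ := hpf
      exact ⟨s, hfH s, fun s' hs' ↦ by rw [hf hs']⟩
    · obtain ⟨b, hb⟩ := hP p hp
      exact ⟨b, hb, fun s hs ↦ (hpf ⟨s, hs⟩).elim⟩
  choose! a avoids_H hits using exists_residue
  refine ⟨a, Set.Subset.antisymm (fun h hh ↦ ⟨hHS hh, ?_⟩) fun g ⟨hgS, hg⟩ ↦ ?_⟩
  · simpa using fun p hp ↦ avoids_H p hp h hh
  · by_contra hgH
    let s : ↥(S \ H) := ⟨g, hgS, hgH⟩
    refine hg (Set.mem_biUnion (hfP s) ?_)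
    simp [hits (f s) (hfP s) s rfl, s]

theorem stmt11_general {H S : Finset ℤ} (hHS : H ⊆ S) {P : Set ℕ}
    (hP : ∀ p ∈ P, ∃ b : ℤ, ∀ h ∈ H, ¬ h ≡ b [ZMOD p]) {x : ℝ} (hx : 0 ≤ x)
    (hcop : {p ∈ P | x < (p : ℝ)}.Pairwise Nat.Coprime)
    (hdist : ∀ s ∈ S, ∀ h ∈ H, |(s - h : ℝ)| ≤ x ^ 2)
    (hcard : (#S : ℕ∞) ≤ {p ∈ P | x < (p : ℝ)}.encard) :
    ∃ a : ℕ → ℤ, (H : Set ℤ) = (S : Set ℤ) \ ⋃ p ∈ P, {g : ℤ | g ≡ a p [ZMOD p]} := by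
  obtain ⟨Q, hQP, hQcard⟩ := Set.exists_subset_encard_eq hcard
  lift Q to Finset ℕ using Set.finite_of_encard_eq_coe hQcard
  replace hQcard : #Q = #S := by simpa using hQcard
  let available (s : ℤ) : Finset ℕ := {p ∈ Q | ∀ h ∈ H, ¬ h ≡ s [ZMOD (p : ℕ)]}
  have card_available (s : ℤ) (hs : s ∈ S \ H) : #(S \ H) ≤ #(available s) := by
    obtain ⟨hsS, hsH⟩ := mem_sdiff.1 hs
    have hle : #Q ≤ #(available s) + #H :=
      card_le_card_filter_forall_not_add_card (fun p h ↦ h ≡ s [ZMOD (p : ℕ)]) fun h hh ↦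
        card_filter_modEq_le_one hx (hcop.mono hQP) (fun p hp ↦ (hQP hp).2)
          (ne_of_mem_of_not_mem hh hsH) (hdist s hsS h hh)
    rw [card_sdiff_of_subset hHS]
    lia
  have natCard_sdiff : Nat.card ↥((S : Set ℤ) \ H) = #(S \ H) := by
    rw [← coe_sdiff, Nat.card_coe_set_eq, Set.ncard_coe_finset]
  obtain ⟨f, hf, hf_mem⟩ := exists_injective_forall_mem_of_natCard_le
    (fun s : ↥((S : Set ℤ) \ H) ↦ available s)
    fun s ↦ natCard_sdiff.trans_le (card_available s (mem_sdiff.2 s.2))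
  exact exists_eq_sdiff_iUnion_modEq (coe_subset.2 hHS) hP hf
    (fun s ↦ (hQP (mem_filter.1 (hf_mem s)).1).1) fun s ↦ (mem_filter.1 (hf_mem s)).2

theorem stmt11 (k : ℕ) (H S : Finset ℤ) (hcard : H.card = k) (hadm : AdmissibleSet H)
    (P : Set ℕ) (hP : ∀ p ∈ P, Nat.Prime p) (x : ℝ) (hx : 2 ≤ x)
    (hHS : H ⊆ S) (hS : ∀ s ∈ S, (0 : ℝ) ≤ (s : ℝ) ∧ (s : ℝ) ≤ x ^ 2)
    (hbig : S.card + k < {p ∈ P | x < (p : ℝ)}.ncard ∨ {p ∈ P | x < (p : ℝ)}.Infinite) :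
    ∃ a : ℕ → ℤ,
      (H : Set ℤ) = (S : Set ℤ) \ ⋃ p ∈ P, {g : ℤ | g ≡ a p [ZMOD (p : ℤ)]} := by
  have card_le : (#S : ℕ∞) ≤ {p ∈ P | x < (p : ℝ)}.encard := by
    obtain hlt | hinf := hbig
    · exact le_trans (by norm_cast; lia) (Set.ncard_le_encard _)
    · simp [hinf.encard_eq]
  exact stmt11_general hHS (fun p hp ↦ hadm.exists_forall_not_modEq (hP p hp)) (by linarith)
    (fun p hp q hq ↦ (Nat.coprime_primes (hP p hp.1) (hP q hq.1)).2)
    (fun s hs h hh ↦ abs_sub_le_of_nonneg_of_le (hS s hs).1 (hS s hs).2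
      (hS h (hHS hh)).1 (hS h (hHS hh)).2) card_le
end
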